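/- Let R and S be symmetric real n×n matrices with [[R, I],[I, S]] positive definite, and let U, V be real n×n matrices with V·Uᵀ = I − R·S. Then: (i) U and V are invertible; (ii) the 2n×2n block matrix [[R, I],[Vᵀ, 0]] is invertible; and (iii) the matrix X := [[I, S],[0, Uᵀ]] · [[R, I],[Vᵀ, 0]]⁻¹ is symmetric and positive definite. -/

import Mathlib

open Matrix

/-!
Put `Y = [[R, I], [Vᴴ, 0]]` and `Z = [[I, S], [0, Uᴴ]]`, so that the Lyapunov matrix is
`X = Z Y⁻¹`. The coupling condition `V Uᴴ = I - R S` says exactly that `Yᴴ Z = [[R, I], [I, S]]`.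
This matrix is positive definite, hence invertible, so both factors are invertible, and their
block triangular shapes (for `Y`, after swapping its block columns) pass this on to `U` and `V`.
Finally `Yᴴ X Y = Yᴴ Z`: the matrix `X` is congruent to a positive definite one.
-/

section Blocks

variable {m n α : Type*} [Fintype m] [DecidableEq m]

theorem isUnit_fromBlocks_zero₂₂ [CommRing α] {A B C : Matrix m m α} :
    IsUnit (fromBlocks A B C 0) ↔ IsUnit B ∧ IsUnit C := by
  rw [← isUnit_submatrix_equiv (Equiv.refl _) (Equiv.sumComm m m), Equiv.coe_refl,
    Equiv.sumComm_apply, fromBlocks_submatrix_sum_swap_right, submatrix_id_id,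
    isUnit_fromBlocks_zero₂₁]

theorem conjTranspose_fromBlocks_mul_fromBlocks [Fintype n] [Ring α] [StarRing α]
    {R S : Matrix m m α} {U V : Matrix m n α} (hR : R.IsHermitian) (hUV : V * Uᴴ = 1 - R * S) :
    (fromBlocks R 1 Vᴴ (0 : Matrix n m α))ᴴ * fromBlocks 1 S 0 Uᴴ = fromBlocks R 1 1 S := by
  simp [fromBlocks_conjTranspose, fromBlocks_multiply, hR.eq, hUV]

end Blocks

section PosDef

variable {n : Type*} [Fintype n] [DecidableEq n]

theorem posDef_mul_inv_iff_conjTranspose_mul {α : Type*} [CommRing α] [PartialOrder α] [StarRing α]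
    {Y Z : Matrix n n α} (hY : IsUnit Y) : (Z * Y⁻¹).PosDef ↔ (Yᴴ * Z).PosDef := by
  have congruence : star Y * (Z * Y⁻¹) * Y = Yᴴ * Z := by
    rw [star_eq_conjTranspose, mul_assoc, mul_assoc,
      nonsing_inv_mul Y ((isUnit_iff_isUnit_det Y).1 hY), mul_one]
  rw [← hY.posDef_star_left_conjugate_iff, congruence]

variable {K : Type*} [Field K] [PartialOrder K] [StarRing K]

theorem stmt_12_general {R S U V : Matrix n n K} (hblk : (fromBlocks R 1 1 S).PosDef)
    (hUV : V * Uᴴ = 1 - R * S) :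
    IsUnit U ∧ IsUnit V ∧ IsUnit (fromBlocks R (1 : Matrix n n K) Vᴴ (0 : Matrix n n K)) ∧
      (fromBlocks (1 : Matrix n n K) S (0 : Matrix n n K) Uᴴ *
        (fromBlocks R (1 : Matrix n n K) Vᴴ (0 : Matrix n n K))⁻¹).PosDef := by
  set Y := fromBlocks R (1 : Matrix n n K) Vᴴ (0 : Matrix n n K)
  set Z := fromBlocks (1 : Matrix n n K) S (0 : Matrix n n K) Uᴴ
  have hR : R.IsHermitian := (isHermitian_fromBlocks_iff.1 hblk.isHermitian).1
  have hYZ : (Yᴴ * Z).PosDef := by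
    rwa [conjTranspose_fromBlocks_mul_fromBlocks hR hUV]
  have hY : IsUnit Y := Y.isUnit_conjTranspose.1 (isUnit_of_mul_isUnit_left hYZ.isUnit)
  have hZ : IsUnit Z := isUnit_of_mul_isUnit_right hYZ.isUnit
  have hU : IsUnit U := U.isUnit_conjTranspose.1 (isUnit_fromBlocks_zero₂₁.1 hZ).2
  have hV : IsUnit V := V.isUnit_conjTranspose.1 (isUnit_fromBlocks_zero₂₂.1 hY).2
  exact ⟨hU, hV, hY, (posDef_mul_inv_iff_conjTranspose_mul hY).2 hYZ⟩

end PosDef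

/-- reconstruction of the Lyapunov matrix `X` from the
transformed decision variables `(S, R, U, V)` with `V Uᵀ = I − R S`. -/
theorem stmt_12 (n : ℕ) (R S U V : Matrix (Fin n) (Fin n) ℝ)
    (hR : R.IsSymm) (hS : S.IsSymm)
    (hblk : (Matrix.fromBlocks R 1 1 S).PosDef)
    (hUV : V * Uᵀ = 1 - R * S) :
    IsUnit U ∧ IsUnit V ∧
    IsUnit (Matrix.fromBlocks R (1 : Matrix (Fin n) (Fin n) ℝ) Vᵀ (0 : Matrix (Fin n) (Fin n) ℝ)) ∧
    (Matrix.fromBlocks (1 : Matrix (Fin n) (Fin n) ℝ) S (0 : Matrix (Fin n) (Fin n) ℝ) Uᵀ * (Matrix.fromBlocks R (1 : Matrix (Fin n) (Fin n) ℝ) Vᵀ (0 : Matrix (Fin n) (Fin n) ℝ))⁻¹).PosDef := by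
  simpa only [conjTranspose_eq_transpose_of_trivial] using
    stmt_12_general hblk (conjTranspose_eq_transpose_of_trivial U ▸ hUV)
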